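/- arXiv:1711.09794 — 2 statements merged into one kernel-verified Lean document; each statement's English description precedes it below -/
import Mathlib

section
/- Trichotomy: every braid β ∈ B_∞ is σ₁-positive, σ₁-negative, or σ₁-free, and each possibility excludes the other two; here β is σ₁-negative if β⁻¹ is σ₁-positive, and σ₁-free if β lies in the image of the shift endomorphism sh. -/
/-- The braid relations on generators indexed by `ℕ` (generator `i` stands for
the Artin generator `σ_{i+1}` of the paper). -/
def braidRels : Set (FreeGroup ℕ) :=
  {r | (∃ i j : ℕ, i + 2 ≤ j ∧
          r = .of i * .of j * (.of i)⁻¹ * (.of j)⁻¹) ∨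
       (∃ i : ℕ,
          r = .of i * .of (i + 1) * .of i *
              (.of (i + 1) * .of i * .of (i + 1))⁻¹)}

/-- The braid group on infinitely many strands. -/
abbrev Binf : Type := PresentedGroup braidRels

/-- `σ i` is the Artin generator `σ_{i+1}` of the paper (0-indexed). -/
def σ (i : ℕ) : Binf := PresentedGroup.of i

lemma mk_rel_eq_one {r : FreeGroup ℕ} (h : r ∈ braidRels) :
    PresentedGroup.mk braidRels r = 1 :=
  (QuotientGroup.eq_one_iff r).mpr (Subgroup.subset_normalClosure h)

lemma shift_lift_eq_one :
    ∀ r ∈ braidRels, FreeGroup.lift (fun n => σ (n + 1)) r = 1 := by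
  intro r hr
  have key : ∀ s ∈ braidRels, FreeGroup.lift (fun n => σ (n + 1)) s
      = PresentedGroup.mk braidRels (FreeGroup.map (· + 1) s) := by
    intro s _
    have : (FreeGroup.lift (fun n => σ (n + 1)) : FreeGroup ℕ →* Binf)
        = (PresentedGroup.mk braidRels).comp (FreeGroup.map (· + 1)) := by
      apply FreeGroup.ext_hom
      intro x
      simp [σ, PresentedGroup.of]
    rw [this]; rfl
  rw [key r hr]
  apply mk_rel_eq_one
  rcases hr with ⟨i, j, hij, rfl⟩ | ⟨i, rfl⟩
  · exact Or.inl ⟨i + 1, j + 1, by omega, by simp⟩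
  · exact Or.inr ⟨i + 1, by simp⟩

/-- The shift endomorphism of the braid group, mapping `σ i` to `σ (i+1)`. -/
def sh : Binf →* Binf := PresentedGroup.toGroup shift_lift_eq_one

@[simp] lemma sh_σ (i : ℕ) : sh (σ i) = σ (i + 1) :=
  PresentedGroup.toGroup.of shift_lift_eq_one

/-- The shifted-conjugation (selfdistributive) operation on `Binf`:
`β₁ ▷ β₂ = β₁ · sh β₂ · σ₁ · (sh β₁)⁻¹`. -/
def sc (β₁ β₂ : Binf) : Binf := β₁ * sh β₂ * σ 0 * (sh β₁)⁻¹

/-- A braid is `σ₁`-positive if it can be written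
`sh γ₀ · σ₁ · sh γ₁ · σ₁ ⋯ σ₁ · sh γₙ` with `n ≥ 1` factors `σ₁`
(recall that `σ 0` is the paper's `σ₁`). -/
def sigma1Pos (β : Binf) : Prop :=
  ∃ (l : List Binf) (γ : Binf), l ≠ [] ∧
    β = (l.map (fun g => sh g * σ 0)).prod * sh γ

/-- A braid is `σ₁`-negative if its inverse is `σ₁`-positive. -/
def sigma1Neg (β : Binf) : Prop := sigma1Pos β⁻¹

/-- A braid is `σ₁`-free if it lies in the image of the shift endomorphism. -/
def sigma1Free (β : Binf) : Prop := ∃ γ : Binf, sh γ = β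

/-! ### Artin action -/

namespace SigmaTri

/-- a letter of the free group -/
def lt (k : ℕ) (b : Bool) : FreeGroup ℕ := FreeGroup.mk [(k, b)]

/-- first letter of the reduced word -/
def hd (g : FreeGroup ℕ) : Option (ℕ × Bool) := g.toWord.head?

lemma toWord_lt_mul (k : ℕ) (b : Bool) (g : FreeGroup ℕ) :
    (lt k b * g).toWord = FreeGroup.reduce ((k, b) :: g.toWord) := by
  conv_lhs => rw [← FreeGroup.mk_toWord (x := g)]
  rw [lt, FreeGroup.mul_mk, FreeGroup.toWord_mk]; rfl

lemma toWord_lt_mul' (k : ℕ) (b : Bool) (g : FreeGroup ℕ) :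
    (hd g = some (k, !b) ∧ g.toWord = (k, !b) :: (lt k b * g).toWord) ∨
    (hd g ≠ some (k, !b) ∧ (lt k b * g).toWord = (k, b) :: g.toWord) := by
  rw [toWord_lt_mul, FreeGroup.reduce.cons, FreeGroup.reduce_toWord, hd]
  rcases h : g.toWord with _ | ⟨⟨k', b'⟩, l⟩
  · right; simp
  · simp only [List.head?_cons]
    by_cases hk : k = k' ∧ b = !b'
    · left; obtain ⟨rfl, rfl⟩ := hk; simp
    · right
      refine ⟨?_, by simp [hk]⟩
      intro h'
      simp only [Option.some.injEq, Prod.mk.injEq] at h'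
      apply hk; obtain ⟨rfl, rfl⟩ := h'; simp

lemma hd_lt_mul (k : ℕ) (b : Bool) (g : FreeGroup ℕ) :
    hd (lt k b * g) = some (k, b) ↔ hd g ≠ some (k, !b) := by
  rcases toWord_lt_mul' k b g with ⟨h1, h2⟩ | ⟨h1, h2⟩
  · simp only [h1, ne_eq, not_true_eq_false, iff_false]
    intro h3
    rw [hd] at h3
    rcases h : (lt k b * g).toWord with _ | ⟨a, l⟩
    · simp [h] at h3
    · rw [h] at h3 h2
      simp only [List.head?_cons, Option.some.injEq] at h3
      have hr := FreeGroup.reduce_toWord g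
      rw [h2, h3] at hr
      have : FreeGroup.reduce ((k, !b) :: (k, b) :: l) = FreeGroup.reduce l := by
        apply FreeGroup.reduce.eq_of_red
        apply FreeGroup.Red.Step.to_red
        exact FreeGroup.Red.Step.cons_not_rev
      rw [this] at hr
      have h4 := (FreeGroup.reduce.red (L := l)).length_le
      rw [hr] at h4
      simp at h4
  · simp only [ne_eq, h1, not_false_eq_true, iff_true]
    simp [hd, h2]

lemma lt_ind {P : FreeGroup ℕ → Prop} (h1 : P 1)
    (h2 : ∀ k b g, hd g ≠ some (k, !b) → P g → P (lt k b * g)) : ∀ g, P g := by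
  have : ∀ n (g : FreeGroup ℕ), g.toWord.length = n → P g := by
    intro n
    induction n with
    | zero =>
      intro g hg
      have := List.eq_nil_of_length_eq_zero hg
      rw [FreeGroup.toWord_eq_nil_iff] at this
      rwa [this]
    | succ n ih =>
      intro g hg
      rcases h : g.toWord with _ | ⟨⟨k, b⟩, l⟩
      · simp [h] at hg
      · have e : g = lt k b * (lt k (!b) * g) := by
          rw [← mul_assoc]
          have : lt k b * lt k (!b) = 1 := by
            cases b
            · exact inv_mul_cancel (FreeGroup.of k)
            · exact mul_inv_cancel (FreeGroup.of k)
          rw [this, one_mul]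
        have hh : hd g = some (k, b) := by simp [hd, h]
        rcases toWord_lt_mul' k (!b) g with ⟨h3, h4⟩ | ⟨h3, h4⟩
        · rw [e]
          apply h2
          · rw [e, hd_lt_mul] at hh; exact hh
          · apply ih
            rw [h4] at hg; simpa using hg
        · simp [hh] at h3
  exact fun g => this _ g rfl

lemma hd_one : hd 1 = none := by simp [hd]

lemma lt_true (k : ℕ) : lt k true = FreeGroup.of k := rfl
lemma lt_false (k : ℕ) : lt k false = (FreeGroup.of k)⁻¹ := rfl

/-- Artin endomorphism -/
def af (i : ℕ) : FreeGroup ℕ →* FreeGroup ℕ := FreeGroup.lift fun k =>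
  if k = i then (.of i)⁻¹ * .of (i + 1) * .of i else if k = i + 1 then .of i else .of k

/-- its inverse -/
def ag (i : ℕ) : FreeGroup ℕ →* FreeGroup ℕ := FreeGroup.lift fun k =>
  if k = i then .of (i + 1) else if k = i + 1 then .of (i + 1) * .of i * (.of (i + 1))⁻¹ else .of k

/-- Artin automorphism -/
def aut (i : ℕ) : MulAut (FreeGroup ℕ) := MonoidHom.toMulEquiv (af i) (ag i)
  (by
    ext k
    by_cases h : k = i
    · subst h; simp [af, ag]; try group
    · by_cases h' : k = i + 1
      · subst h'; simp [af, ag]; try group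
      · simp [af, ag, h, h'])
  (by
    ext k
    by_cases h : k = i
    · subst h; simp [af, ag]; try group
    · by_cases h' : k = i + 1
      · subst h'; simp [af, ag]; try group
      · simp [af, ag, h, h'])

lemma aut_apply (i : ℕ) (g) : aut i g = af i g := rfl

lemma af_of (i k : ℕ) : af i (.of k) =
  if k = i then (.of i)⁻¹ * .of (i + 1) * .of i else if k = i + 1 then .of i else .of k := by
  simp [af]

lemma aut_ext {a b : MulAut (FreeGroup ℕ)} (h : ∀ k, a (.of k) = b (.of k)) : a = b := by
  apply MulEquiv.toMonoidHom_injective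
  ext k
  exact h k

lemma aut_comm (i j : ℕ) (h : i + 2 ≤ j) : aut i * aut j = aut j * aut i := by
  apply aut_ext
  intro k
  simp only [MulAut.mul_apply, aut_apply, af_of]
  split_ifs <;> simp only [map_mul, map_inv, af_of] <;> split_ifs <;> first | rfl | omega

lemma aut_braid (i : ℕ) : aut i * aut (i+1) * aut i = aut (i+1) * aut i * aut (i+1) := by
  apply aut_ext
  intro k
  simp only [MulAut.mul_apply, aut_apply]
  have n1 : i ≠ i + 1 + 1 := by omega
  have n2 : i + 1 + 1 ≠ i := by omega
  by_cases h0 : k = i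
  · subst h0; simp [af_of, mul_assoc, n1, n2]
  by_cases h1 : k = i + 1
  · subst h1; simp [af_of, mul_assoc, n1, n2]
  by_cases h2 : k = i + 2
  · subst h2; simp [af_of, n1]
  simp [af_of, h0, h1, h2]

lemma aut_rel : ∀ r ∈ braidRels, FreeGroup.lift aut r = 1 := by
  rintro r (⟨i, j, h, rfl⟩ | ⟨i, rfl⟩)
  · simp only [map_mul, map_inv, FreeGroup.lift_apply_of]
    rw [aut_comm i j h]; group
  · simp only [map_mul, map_inv, FreeGroup.lift_apply_of]
    rw [aut_braid i]; group

/-- Artin representation -/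
def art : Binf →* MulAut (FreeGroup ℕ) := PresentedGroup.toGroup aut_rel

lemma art_σ (i : ℕ) : art (σ i) = aut i := PresentedGroup.toGroup.of aut_rel

/-- The invariant describing the first letters of `af i w`. -/
def Inv (i : ℕ) (w : FreeGroup ℕ) : Prop :=
  (hd w = some (i, true) → hd (lt i true * af i w) = some (i+1, true)) ∧
  (hd w = some (i, false) → hd (lt i true * af i w) = some (i+1, false)) ∧
  (hd w = some (i+1, true) → hd (af i w) = some (i, true) ∨ hd (af i w) = some (i+1, true) ∨
    hd (af i w) = some (i+1, false)) ∧
  (hd w = some (i+1, false) → hd (af i w) = some (i, false) ∧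
    hd (lt i true * af i w) ≠ some (i+1, true) ∧ hd (lt i true * af i w) ≠ some (i+1, false)) ∧
  (∀ j b, j ≠ i → j ≠ i+1 → hd w = some (j, b) → hd (af i w) = some (j, b)) ∧
  (hd w = none → af i w = 1)

lemma inv_all (i : ℕ) : ∀ w, Inv i w := by
  apply lt_ind
  · simp [Inv, hd_one]
  · intro k b g hg ih
    have hw : hd (lt k b * g) = some (k, b) := (hd_lt_mul k b g).2 hg
    obtain ⟨i1, i2, i3, i4, i5, i6⟩ := ih
    have key := hd_lt_mul i true (af i g)
    have cases_g : hd g = none ∨ hd g = some (i, true) ∨ hd g = some (i, false) ∨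
        hd g = some (i+1, true) ∨ hd g = some (i+1, false) ∨
        ∃ j b, j ≠ i ∧ j ≠ i + 1 ∧ hd g = some (j, b) := by
      rcases hd g with _ | ⟨j, b⟩
      · simp
      · by_cases h0 : j = i
        · cases b <;> simp [h0]
        by_cases h1 : j = i+1
        · cases b <;> simp [h1]
        simp [h0, h1]
    have h11 : hd (1 : FreeGroup ℕ) = none := hd_one
    by_cases h0 : k = i
    · subst h0
      have e : lt k true * af k (lt k b * g) = lt (k+1) b * (lt k true * af k g) := by
        cases b <;> simp [lt_true, lt_false, af_of, mul_assoc]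
      have k2 := hd_lt_mul (k+1) b (lt k true * af k g)
      rw [Inv, e, hw]
      have : hd (lt k true * af k g) ≠ some (k+1, !b) := by
        rcases cases_g with h | h | h | h | h | ⟨j, c, hj, hj', h⟩ <;> cases b <;> grind
      grind
    by_cases h1 : k = i + 1
    · subst h1
      cases b
      · have e : lt i true * af i (lt (i+1) false * g) = af i g := by
          simp [lt_true, lt_false, af_of]
        have e2 : af i (lt (i+1) false * g) = lt i false * af i g := by
          simp [lt_false, af_of]
        have k2 := hd_lt_mul i false (af i g)
        rw [Inv, e, hw, e2]
        rcases cases_g with h | h | h | h | h | ⟨j, c, hj, hj', h⟩ <;> grind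
      · have e2 : af i (lt (i+1) true * g) = lt i true * af i g := by
          simp [lt_true, af_of]
        rw [Inv, hw, e2]
        rcases cases_g with h | h | h | h | h | ⟨j, c, hj, hj', h⟩ <;> grind
    · have e2 : af i (lt k b * g) = lt k b * af i g := by
        cases b <;> simp [lt_true, lt_false, af_of, h0, h1]
      have k2 := hd_lt_mul k b (af i g)
      rw [Inv, hw, e2]
      have : hd (af i g) ≠ some (k, !b) := by
        rcases cases_g with h | h | h | h | h | ⟨j, c, hj, hj', h⟩ <;> grind
      grind

/-- words starting with `x₀⁻¹` -/
def Neg0 (w : FreeGroup ℕ) : Prop := hd w = some (0, false)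

lemma neg0_zero (w) (h : Neg0 w) : Neg0 (aut 0 w) := by
  obtain ⟨-, i2, -⟩ := inv_all 0 w
  have := i2 h
  have key := hd_lt_mul 0 true (af 0 w)
  rw [Neg0, aut_apply]
  grind

lemma neg0_succ (i : ℕ) (w) : Neg0 (aut (i+1) w) ↔ Neg0 w := by
  obtain ⟨i1, i2, i3, i4, i5, i6⟩ := inv_all (i+1) w
  have key := hd_lt_mul (i+1) true (af (i+1) w)
  have h11 : hd (1 : FreeGroup ℕ) = none := hd_one
  rw [Neg0, Neg0, aut_apply]
  constructor
  · intro h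
    rcases hw : hd w with _ | ⟨j, b⟩
    · grind
    · by_cases h0 : j = i+1
      · cases b <;> grind
      by_cases h1 : j = i+1+1
      · cases b <;> grind
      grind
  · intro h
    exact i5 0 false (by omega) (by omega) h

lemma binf_induction {P : Binf → Prop} (h1 : P 1) (hm : ∀ β i, P β → P (β * σ i))
    (hi : ∀ β i, P β → P (β * (σ i)⁻¹)) : ∀ β, P β := by
  intro β
  have : β ∈ Subgroup.closure (Set.range (PresentedGroup.of (rels := braidRels))) := by
    rw [PresentedGroup.closure_range_of]; trivial
  induction this using Subgroup.closure_induction_right with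
  | one => exact h1
  | mul_right x hx y hy ih => obtain ⟨i, rfl⟩ := hy; exact hm _ _ ih
  | mul_inv_cancel x hx y hy ih => obtain ⟨i, rfl⟩ := hy; exact hi _ _ ih

lemma neg0_sh (γ : Binf) : ∀ w, Neg0 (art (sh γ) w) ↔ Neg0 w := by
  induction γ using binf_induction with
  | h1 => simp
  | hm β i ih => intro w; simp [art_σ, ih, neg0_succ]
  | hi β i ih =>
    intro w
    simp only [map_mul, map_inv, sh_σ, MulAut.mul_apply, ih, art_σ]
    rw [← neg0_succ i, MulAut.apply_inv_self]

lemma fix_sh (γ : Binf) : art (sh γ) (.of 0) = .of 0 := by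
  have h0 : ∀ i, aut (i+1) (.of 0) = .of 0 := by intro i; simp [aut_apply, af_of]
  induction γ using binf_induction with
  | h1 => simp
  | hm β i ih => simp [art_σ, ih, h0]
  | hi β i ih =>
    simp only [map_mul, map_inv, sh_σ, MulAut.mul_apply, art_σ]
    conv_lhs => rw [← h0 i]
    rw [MulAut.inv_apply_self, ih]

lemma neg0_pos (l : List Binf) (hl : l ≠ []) :
    Neg0 (art (l.map (fun g => sh g * σ 0)).prod (.of 0)) := by
  induction l with
  | nil => exact absurd rfl hl
  | cons a l ih =>
    simp only [List.map_cons, List.prod_cons, map_mul, MulAut.mul_apply, neg0_sh, art_σ]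
    by_cases h : l = []
    · subst h
      have : aut 0 (.of 0) = lt 0 false * (lt 1 true * lt 0 true) := by
        simp [aut_apply, af_of, lt_true, lt_false, mul_assoc]
      simp only [List.map_nil, List.prod_nil, map_one, MulAut.one_apply]
      rw [this, Neg0, hd_lt_mul]
      have : hd (lt 1 true * lt 0 true) = some (1, true) := by
        rw [hd_lt_mul]; simp [hd, lt]
      rw [this]; simp
    · exact neg0_zero _ (ih h)

lemma not_pos_free (β : Binf) : ¬(sigma1Pos β ∧ sigma1Free β) := by
  rintro ⟨⟨l, γ, hl, rfl⟩, ⟨δ, hδ⟩⟩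
  have h := neg0_pos l hl
  have e := fix_sh δ
  rw [hδ, map_mul, MulAut.mul_apply, fix_sh] at e
  rw [e] at h
  simp [Neg0, hd] at h

lemma pos_mul {a b : Binf} (ha : sigma1Pos a) (hb : sigma1Pos b) : sigma1Pos (a * b) := by
  obtain ⟨l, γ, hl, rfl⟩ := ha
  obtain ⟨m, δ, hm, rfl⟩ := hb
  obtain ⟨c, m, rfl⟩ := List.exists_cons_of_ne_nil hm
  refine ⟨l ++ (γ * c) :: m, δ, by simp, ?_⟩
  simp [mul_assoc]

lemma pos_sh_left {a : Binf} (g : Binf) (ha : sigma1Pos a) : sigma1Pos (sh g * a) := by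
  obtain ⟨l, γ, hl, rfl⟩ := ha
  obtain ⟨c, m, rfl⟩ := List.exists_cons_of_ne_nil hl
  exact ⟨(g * c) :: m, γ, by simp, by simp [mul_assoc]⟩

lemma pos_sh_right {a : Binf} (g : Binf) (ha : sigma1Pos a) : sigma1Pos (a * sh g) := by
  obtain ⟨l, γ, hl, rfl⟩ := ha
  exact ⟨l, γ * g, hl, by simp [mul_assoc]⟩

lemma pos_sc (a b : Binf) : sigma1Pos (a⁻¹ * sc a b) :=
  ⟨[b], a⁻¹, by simp, by simp [sc, mul_assoc]⟩

lemma σ_comm (i j : ℕ) (h : i + 2 ≤ j) : σ i * σ j = σ j * σ i := by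
  have := mk_rel_eq_one (Or.inl ⟨i, j, h, rfl⟩)
  simp only [map_mul, map_inv] at this
  rw [mul_inv_eq_one, mul_inv_eq_iff_eq_mul] at this
  exact this

lemma σ_braid (i : ℕ) : σ i * σ (i+1) * σ i = σ (i+1) * σ i * σ (i+1) := by
  have := mk_rel_eq_one (Or.inr ⟨i, rfl⟩)
  rw [map_mul, map_inv, mul_inv_eq_one] at this
  simp only [map_mul] at this
  exact this

lemma sh2_comm (γ : Binf) : σ 0 * sh (sh γ) = sh (sh γ) * σ 0 := by
  change Commute _ _
  induction γ using binf_induction with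
  | h1 => simp
  | hm β i ih =>
    simp only [map_mul, sh_σ]
    exact ih.mul_right (σ_comm _ _ (by omega))
  | hi β i ih =>
    simp only [map_mul, sh_σ, map_inv]
    exact ih.mul_right (Commute.inv_right (σ_comm _ _ (by omega)))

lemma sc_ld (a b c : Binf) : sc a (sc b c) = sc (sc a b) (sc a c) := by
  have hc := sh2_comm c
  have ha := sh2_comm a
  have hb := sh2_comm b
  have br : σ 0 * (σ 1 * σ 0) = σ 1 * (σ 0 * σ 1) := by
    simpa only [mul_assoc] using σ_braid 0
  simp only [sc, map_mul, map_inv, sh_σ, mul_inv_rev, inv_inv, zero_add]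
  have h1 : (sh (sh a))⁻¹ * (σ 0 * sh (sh a)) = σ 0 := by rw [ha]; group
  have h2 : σ 1 * ((sh (sh b))⁻¹ * σ 0) = σ 1 * (σ 0 * (sh (sh b))⁻¹) := by
    rw [(Commute.inv_right hb : σ 0 * _ = _)]
  calc _ = a * sh b * sh (sh c) * (σ 1 * ((sh (sh b))⁻¹ * σ 0)) * (sh a)⁻¹ := by group
    _ = a * sh b * sh (sh c) * (σ 1 * (σ 0 * σ 1)) * (σ 1)⁻¹ * (sh (sh b))⁻¹ * (sh a)⁻¹ := by
        rw [h2]; group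
    _ = a * sh b * (sh (sh c) * σ 0) * (σ 1 * σ 0) * (σ 1)⁻¹ * (sh (sh b))⁻¹ * (sh a)⁻¹ := by
        rw [← br]; group
    _ = a * sh b * (σ 0 * sh (sh c)) * (σ 1 * ((sh (sh a))⁻¹ * (σ 0 * sh (sh a)))) * (σ 1)⁻¹
          * (sh (sh b))⁻¹ * (sh a)⁻¹ := by
        rw [h1, hc]
    _ = _ := by group

/-! ### LD terms -/

/-- one-variable terms -/
inductive T : Type
  | x : T
  | m : T → T → T

/-- one-step LD-expansion -/
inductive St : T → T → Prop
  | root (a b c) : St (.m a (.m b c)) (.m (.m a b) (.m a c))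
  | left {a a'} (b) : St a a' → St (.m a b) (.m a' b)
  | right (a) {b b'} : St b b' → St (.m a b) (.m a b')

abbrev Ex : T → T → Prop := Relation.ReflTransGen St

lemma Ex.m {a a' b b' : T} (h : Ex a a') (h' : Ex b b') : Ex (.m a b) (.m a' b') :=
  (Relation.ReflTransGen.lift (fun z => T.m z b) (fun _ _ s => St.left b s) _ _ h).trans
    (Relation.ReflTransGen.lift (fun z => T.m a' z) (fun _ _ s => St.right a' s) _ _ h')

def ds (t : T) : T → T
  | .x => .m t .x
  | .m a b => .m (ds t a) (ds t b)

/-- the derivative -/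
def der : T → T
  | .x => .x
  | .m a b => ds (der a) (der b)

lemma ex_ds (t s : T) : Ex (.m t s) (ds t s) := by
  induction s with
  | x => exact .refl
  | m a b iha ihb => exact (Relation.ReflTransGen.single (St.root t a b)).trans (iha.m ihb)

lemma ds_step (t : T) {s s' : T} (h : St s s') : St (ds t s) (ds t s') := by
  induction h with
  | root a b c => exact St.root _ _ _
  | left b _ ih => exact St.left _ ih
  | right a _ ih => exact St.right _ ih

lemma ds_mono {t t' s s' : T} (h : Ex t t') (h' : Ex s s') : Ex (ds t s) (ds t' s') := by
  have h1 : Ex (ds t s) (ds t s') := Relation.ReflTransGen.lift (ds t) (fun _ _ k => ds_step t k) _ _ h'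
  refine h1.trans ?_
  clear h1 h'
  induction s' with
  | x => exact h.m .refl
  | m a b iha ihb => exact Ex.m iha ihb

lemma ex_der (t : T) : Ex t (der t) := by
  induction t with
  | x => exact .refl
  | m a b iha ihb => exact (iha.m ihb).trans (ex_ds _ _)

lemma z1 {t t' : T} (h : St t t') : Ex t' (der t) := by
  induction h with
  | root a b c =>
    have h1 : Ex (.m (.m a b) (.m a c)) (.m (ds (der a) (der b)) (ds (der a) (der c))) :=
      Ex.m (((ex_der a).m (ex_der b)).trans (ex_ds _ _)) (((ex_der a).m (ex_der c)).trans (ex_ds _ _))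
    exact h1.trans (ds_mono (s := .m (der b) (der c)) .refl (ex_ds _ _))
  | left b _ ih => exact (ih.m (ex_der b)).trans (ex_ds _ _)
  | right a _ ih => exact ((ex_der a).m ih).trans (ex_ds _ _)

lemma ds_ds (a b c : T) : Ex (ds a (ds b c)) (ds (ds a b) (ds a c)) := by
  induction c with
  | x => exact ex_ds _ _
  | m c d ihc ihd => exact ihc.m ihd

lemma z2 {t t' : T} (h : St t t') : Ex (der t) (der t') := by
  induction h with
  | root a b c => exact ds_ds _ _ _
  | left b _ ih => exact ds_mono ih .refl
  | right a _ ih => exact ds_mono .refl ih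

lemma der_mono {t t' : T} (h : Ex t t') : Ex (der t) (der t') := by
  induction h with
  | refl => exact .refl
  | tail _ h ih => exact ih.trans (z2 h)

lemma der_iter_mono (n : ℕ) {t t' : T} (h : Ex t t') : Ex (der^[n] t) (der^[n] t') := by
  induction n generalizing t t' with
  | zero => exact h
  | succ n ih => exact ih (der_mono h)

lemma ex_der_iter (n : ℕ) (t : T) : Ex t (der^[n] t) := by
  induction n generalizing t with
  | zero => exact .refl
  | succ n ih => exact (ex_der t).trans (ih (der t))

lemma ex_cofinal {t u : T} (h : Ex t u) : ∃ n, Ex u (der^[n] t) := by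
  induction h with
  | refl => exact ⟨0, .refl⟩
  | tail _ h ih =>
    obtain ⟨n, hn⟩ := ih
    refine ⟨n + 1, ?_⟩
    rw [Function.iterate_succ_apply']
    exact (z1 h).trans (der_mono hn)

lemma confl {t u v : T} (h : Ex t u) (h' : Ex t v) : ∃ w, Ex u w ∧ Ex v w := by
  obtain ⟨n, hn⟩ := ex_cofinal h
  exact ⟨der^[n] v, hn.trans (der_iter_mono n h'), ex_der_iter n v⟩

/-- LD-equivalence -/
def Eqv (a b : T) : Prop := ∃ w, Ex a w ∧ Ex b w

lemma Eqv.rfl' (a : T) : Eqv a a := ⟨a, .refl, .refl⟩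
lemma Eqv.symm' {a b : T} (h : Eqv a b) : Eqv b a := h.imp fun _ h => h.symm
lemma Eqv.trans' {a b c : T} (h : Eqv a b) (h' : Eqv b c) : Eqv a c := by
  obtain ⟨w, h1, h2⟩ := h
  obtain ⟨w', h3, h4⟩ := h'
  obtain ⟨z, h5, h6⟩ := confl h2 h3
  exact ⟨z, h1.trans h5, h4.trans h6⟩
lemma Eqv.m {a a' b b' : T} (h : Eqv a a') (h' : Eqv b b') : Eqv (.m a b) (.m a' b') := by
  obtain ⟨w, h1, h2⟩ := h
  obtain ⟨w', h3, h4⟩ := h'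
  exact ⟨_, h1.m h3, h2.m h4⟩

/-- right powers -/
def pw : ℕ → T
  | 0 => .x
  | n + 1 => .m .x (pw n)

lemma absorb (t : T) : ∃ N, ∀ n, N ≤ n → Eqv (pw (n + 1)) (.m t (pw n)) := by
  induction t with
  | x => exact ⟨0, fun n _ => Eqv.rfl' _⟩
  | m a b iha ihb =>
    obtain ⟨N, hN⟩ := iha
    obtain ⟨M, hM⟩ := ihb
    refine ⟨N + M + 1, fun n hn => ?_⟩
    obtain ⟨k, rfl⟩ : ∃ k, n = k + 1 := ⟨n - 1, by omega⟩
    have h1 := hN (k + 1) (by omega)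
    have h2 := hM k (by omega)
    have h3 := hN k (by omega)
    have h4 : Eqv (.m a (.m b (pw k))) (.m (.m a b) (.m a (pw k))) :=
      ⟨_, Relation.ReflTransGen.single (St.root _ _ _), .refl⟩
    exact ((h1.trans' ((Eqv.rfl' a).m h2)).trans' h4).trans' ((Eqv.rfl' _).m h3.symm')

def Lf (a : T) : T → Prop
  | .x => False
  | .m c _ => a = c ∨ Lf a c

lemma lf_step {t t' : T} (h : St t t') : ∀ a, Lf a t → ∃ a', Ex a a' ∧ Lf a' t' := by
  induction h with
  | root b c d => intro a ha; exact ⟨a, .refl, Or.inr ha⟩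
  | left b h ih =>
    rintro a (rfl | ha)
    · exact ⟨_, .single h, Or.inl rfl⟩
    · obtain ⟨a', h1, h2⟩ := ih a ha
      exact ⟨a', h1, Or.inr h2⟩
  | right b h ih => intro a ha; exact ⟨a, .refl, ha⟩

lemma lf_ex {t t' : T} (h : Ex t t') (a : T) (ha : Lf a t) : ∃ a', Ex a a' ∧ Lf a' t' := by
  induction h with
  | refl => exact ⟨a, .refl, ha⟩
  | tail _ h ih =>
    obtain ⟨b, h1, h2⟩ := ih
    obtain ⟨c, h3, h4⟩ := lf_step h b h2
    exact ⟨c, h1.trans h3, h4⟩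

lemma lf_total (u : T) (a b : T) (ha : Lf a u) (hb : Lf b u) : a = b ∨ Lf a b ∨ Lf b a := by
  induction u with
  | x => exact ha.elim
  | m c d ih _ =>
    rcases ha with rfl | ha <;> rcases hb with rfl | hb
    · simp
    · exact Or.inr (Or.inr hb)
    · exact Or.inr (Or.inl ha)
    · exact ih ha hb

/-- evaluation in the braid group -/
def ev : T → Binf
  | .x => 1
  | .m a b => sc (ev a) (ev b)

lemma ev_st {t t' : T} (h : St t t') : ev t = ev t' := by
  induction h with
  | root a b c => exact sc_ld _ _ _
  | left b _ ih => simp [ev, ih]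
  | right a _ ih => simp [ev, ih]

lemma ev_ex {t t' : T} (h : Ex t t') : ev t = ev t' := by
  induction h with
  | refl => rfl
  | tail _ h ih => rw [ih, ev_st h]

lemma ev_lf {a t : T} (h : Lf a t) : sigma1Pos ((ev a)⁻¹ * ev t) := by
  induction t with
  | x => exact h.elim
  | m c d ih _ =>
    rcases h with rfl | h
    · exact pos_sc _ _
    · have := pos_mul (ih h) (pos_sc (ev c) (ev d))
      simpa [mul_assoc, ev] using this

lemma ev_compare (s t : T) : ev s = ev t ∨ sigma1Pos ((ev s)⁻¹ * ev t) ∨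
    sigma1Pos ((ev t)⁻¹ * ev s) := by
  obtain ⟨N, hN⟩ := absorb s
  obtain ⟨M, hM⟩ := absorb t
  obtain ⟨u, h1, h2⟩ := (hN (N + M) (by omega)).symm'.trans' (hM (N + M) (by omega))
  obtain ⟨a, h3, h4⟩ := lf_ex h1 s (Or.inl rfl)
  obtain ⟨b, h5, h6⟩ := lf_ex h2 t (Or.inl rfl)
  rw [ev_ex h3, ev_ex h5]
  rcases lf_total u a b h4 h6 with rfl | h | h
  · simp
  · exact Or.inr (Or.inl (ev_lf h))
  · exact Or.inr (Or.inr (ev_lf h))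

/-! ### Decomposition of positive braids -/

/-- products `b₀ sh(b₁) sh²(b₂) …` of special braids -/
inductive Sp : Binf → Prop
  | one : Sp 1
  | cons (t : T) {β : Binf} : Sp β → Sp (ev t * sh β)

lemma Sp.pad {β : Binf} (h : Sp β) : ∃ t β', Sp β' ∧ β = ev t * sh β' := by
  cases h with
  | one => exact ⟨.x, 1, .one, by simp [ev]⟩
  | cons t h => exact ⟨t, _, h, rfl⟩

lemma Sp.mul_σ (i : ℕ) : ∀ {β : Binf}, Sp β → Sp (β * σ i) := by
  induction i with
  | zero =>
    intro β h
    obtain ⟨t, β, h', rfl⟩ := h.pad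
    obtain ⟨s, β, h'', rfl⟩ := h'.pad
    have : ev t * sh (ev s * sh β) * σ 0 = ev (.m t s) * sh (ev t * sh β) := by
      simp only [map_mul, ev, sc, mul_assoc, inv_mul_cancel_left]
      rw [sh2_comm]
    rw [this]
    exact .cons _ (.cons _ h'')
  | succ i ih =>
    intro β h
    obtain ⟨t, β, h', rfl⟩ := h.pad
    clear h
    have : ev t * sh β * σ (i + 1) = ev t * sh (β * σ i) := by simp [mul_assoc]
    rw [this]
    exact .cons _ (ih h')

inductive Po : Binf → Prop
  | one : Po 1
  | snoc {β : Binf} (i : ℕ) : Po β → Po (β * σ i)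

lemma Po.sp {β : Binf} (h : Po β) : Sp β := by
  induction h with
  | one => exact .one
  | snoc i _ ih => exact ih.mul_σ i

lemma Po.mul {a b : Binf} (ha : Po a) (hb : Po b) : Po (a * b) := by
  induction hb with
  | one => simpa
  | snoc i _ ih => rw [← mul_assoc]; exact .snoc i ih

lemma Po.σ (i : ℕ) : Po (σ i) := by simpa using Po.snoc i Po.one

/-- `σ₀ σ₁ ⋯ σ_{n-1}` -/
def cy : ℕ → Binf
  | 0 => 1
  | n + 1 => cy n * σ n

/-- Garside element -/
def De : ℕ → Binf
  | 0 => 1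
  | n + 1 => cy (n + 1) * De n

lemma cy_comm (n j : ℕ) (h : n + 1 ≤ j) : cy n * σ j = σ j * cy n := by
  change Commute _ _
  induction n with
  | zero => simp [cy]
  | succ n ih => exact (ih (by omega)).mul_left (σ_comm _ _ (by omega))

lemma cy_shift (n j : ℕ) (h : j + 2 ≤ n) : cy n * σ j = σ (j + 1) * cy n := by
  induction n with
  | zero => omega
  | succ n ih =>
    by_cases hj : j + 2 ≤ n
    · rw [cy, mul_assoc, ← σ_comm j n hj, ← mul_assoc, ih hj, mul_assoc]
    · obtain rfl : n = j + 1 := by omega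
      have br := σ_braid j
      have cc := cy_comm j (j + 1) le_rfl
      simp only [cy]
      calc cy j * σ j * σ (j+1) * σ j = cy j * (σ j * σ (j+1) * σ j) := by group
        _ = (cy j * σ (j+1)) * σ j * σ (j+1) := by rw [br]; group
        _ = _ := by rw [cc]; group

lemma cy_sh (n : ℕ) : cy (n + 1) = σ 0 * sh (cy n) := by
  induction n with
  | zero => simp [cy]
  | succ n ih =>
    change cy (n + 1) * σ (n + 1) = σ 0 * sh (cy n * σ n)
    rw [ih]; simp [mul_assoc]

lemma cy_cy (n m : ℕ) (h : m + 1 ≤ n) : cy n * cy m = sh (cy m) * cy n := by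
  induction m with
  | zero => simp [cy]
  | succ m ih =>
    rw [cy, ← mul_assoc, ih (by omega), mul_assoc, cy_shift n m (by omega)]
    simp [mul_assoc]

lemma De_comm (n j : ℕ) (h : n + 1 ≤ j) : De n * σ j = σ j * De n := by
  change Commute _ _
  induction n with
  | zero => simp [De]
  | succ n ih => exact Commute.mul_left (cy_comm _ _ h) (ih (by omega))

lemma De_top (n : ℕ) : De (n + 1) * σ n = σ 0 * De (n + 1) := by
  cases n with
  | zero => simp [De, cy]
  | succ n =>
    have h1 := De_comm n (n + 1) le_rfl
    have h2 : σ 0 * (cy (n + 2) * cy (n + 1)) = cy (n + 2) * cy (n + 2) := by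
      rw [cy_cy _ _ (by omega), ← mul_assoc, ← cy_sh]
    calc De (n + 1 + 1) * σ (n + 1) = cy (n+2) * (cy (n+1) * (De n * σ (n+1))) := by
          simp only [De, mul_assoc]
      _ = cy (n+2) * (cy (n+1) * σ (n+1)) * De n := by rw [h1]; group
      _ = cy (n+2) * cy (n+2) * De n := rfl
      _ = _ := by rw [← h2]; simp only [De, mul_assoc]

lemma De_σ (n i : ℕ) (h : i < n) : De n * σ i = σ (n - 1 - i) * De n := by
  induction n with
  | zero => omega
  | succ n ih =>
    by_cases hi : i < n
    · rw [De, mul_assoc, ih hi, ← mul_assoc, cy_shift _ _ (by omega), mul_assoc]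
      congr 2
      omega
    · obtain rfl : i = n := by omega
      rw [De_top]; simp

lemma Po.cy (n : ℕ) : Po (cy n) := by
  induction n with
  | zero => exact .one
  | succ n ih => exact .snoc n ih

lemma Po.De (n : ℕ) : Po (De n) := by
  induction n with
  | zero => exact .one
  | succ n ih => exact (Po.cy _).mul ih

lemma Po.sh {β : Binf} (h : Po β) : Po (sh β) := by
  induction h with
  | one => simpa using Po.one
  | snoc i _ ih => rw [map_mul, sh_σ]; exact .snoc _ ih

lemma De_end (n i : ℕ) (h : i < n) : Po (De n * (σ i)⁻¹) := by
  induction n with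
  | zero => omega
  | succ n ih =>
    by_cases hi : i < n
    · rw [De, mul_assoc]; exact (Po.cy _).mul (ih hi)
    · obtain rfl : i = n := by omega
      have h1 := De_top i
      have h2 : De (i+1) * (σ i)⁻¹ = (σ 0)⁻¹ * De (i+1) := by
        rw [mul_inv_eq_iff_eq_mul, mul_assoc, h1, inv_mul_cancel_left]
      rw [h2, De, cy_sh, mul_assoc, inv_mul_cancel_left]
      exact (Po.cy _).sh.mul (Po.De _)

lemma De_po {q : Binf} (h : Po q) : ∃ N, ∀ n, N ≤ n → ∃ q', Po q' ∧ De n * q = q' * De n := by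
  induction h with
  | one => exact ⟨0, fun n _ => ⟨1, .one, by simp⟩⟩
  | snoc i _ ih =>
    obtain ⟨N, hN⟩ := ih
    refine ⟨N + i + 1, fun n hn => ?_⟩
    obtain ⟨q', h1, h2⟩ := hN n (by omega)
    refine ⟨q' * σ (n - 1 - i), .snoc _ h1, ?_⟩
    rw [← mul_assoc, h2, mul_assoc, De_σ n i (by omega), mul_assoc]

lemma fraction (β : Binf) : ∃ p, Po p ∧ Po (p * β) := by
  induction β using binf_induction with
  | h1 => exact ⟨1, .one, by simpa using Po.one⟩
  | hm β i ih =>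
    obtain ⟨p, h1, h2⟩ := ih
    exact ⟨p, h1, by rw [← mul_assoc]; exact .snoc i h2⟩
  | hi β i ih =>
    obtain ⟨p, h1, h2⟩ := ih
    obtain ⟨N, hN⟩ := De_po h2
    obtain ⟨q, h3, h4⟩ := hN (N + i + 1) (by omega)
    refine ⟨De (N + i + 1) * p, (Po.De _).mul h1, ?_⟩
    have : De (N + i + 1) * p * (β * (σ i)⁻¹) = q * (De (N + i + 1) * (σ i)⁻¹) := by
      rw [← mul_assoc q, ← h4]; group
    rw [this]
    exact h3.mul (De_end _ _ (by omega))

lemma exists_case (β : Binf) : sigma1Pos β ∨ sigma1Neg β ∨ sigma1Free β := by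
  obtain ⟨p, h1, h2⟩ := fraction β
  obtain ⟨s, a, -, hs⟩ := h1.sp.pad
  obtain ⟨t, b, -, ht⟩ := h2.sp.pad
  have e : β = sh a⁻¹ * ((ev s)⁻¹ * ev t) * sh b := by
    have : β = p⁻¹ * (p * β) := by group
    rw [this, ht, hs, map_inv]; group
  rcases ev_compare s t with h | h | h
  · right; right
    exact ⟨a⁻¹ * b, by rw [e, h]; simp⟩
  · left
    rw [e]
    exact pos_sh_right _ (pos_sh_left _ h)
  · right; left
    have e' : β⁻¹ = sh b⁻¹ * ((ev t)⁻¹ * ev s) * sh a := by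
      rw [e]; simp only [map_inv]; group
    rw [sigma1Neg, e']
    exact pos_sh_right _ (pos_sh_left _ h)

end SigmaTri

/-- every braid is `σ₁`-positive, `σ₁`-negative or `σ₁`-free,
and each possibility excludes the other two. -/
theorem sigma1_trichotomy (β : Binf) :
    (sigma1Pos β ∨ sigma1Neg β ∨ sigma1Free β) ∧
    ¬(sigma1Pos β ∧ sigma1Neg β) ∧
    ¬(sigma1Pos β ∧ sigma1Free β) ∧
    ¬(sigma1Neg β ∧ sigma1Free β) := by
  refine ⟨SigmaTri.exists_case β, ?_, SigmaTri.not_pos_free β, ?_⟩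
  · rintro ⟨h1, h2⟩
    have h3 := SigmaTri.pos_mul h1 h2
    rw [mul_inv_cancel] at h3
    exact SigmaTri.not_pos_free 1 ⟨h3, 1, map_one _⟩
  · rintro ⟨h1, γ, rfl⟩
    exact SigmaTri.not_pos_free _ ⟨h1, γ⁻¹, map_inv _ _⟩
end

section
/- The braid order: for β₁, β₂ ∈ B_∞, define β₁ < β₂ to mean that β₁⁻¹β₂ is σ_i-positive for some i ≥ 1, i.e., β₁⁻¹β₂ = sh^{i−1}(γ) for some i ≥ 1 and some σ₁-positive braid γ. Then < is a strict linear order on B_∞ (irreflexive, transitive, and for all β₁ ≠ β₂ either β₁ < β₂ or β₂ < β₁), and it is compatible with multiplication on the left: β₁ < β₂ implies γβ₁ < γβ₂ for every γ ∈ B_∞. -/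
/-- The braid order: `blt β₁ β₂` holds when `β₁⁻¹ β₂` is `σ_i`-positive for
some `i ≥ 1`, i.e. `β₁⁻¹ β₂ = sh^{i-1} γ` for some `σ₁`-positive `γ`. -/
def blt (β₁ β₂ : Binf) : Prop :=
  ∃ (k : ℕ) (γ : Binf), sigma1Pos γ ∧ β₁⁻¹ * β₂ = (⇑sh)^[k] γ

section Terms

/-- Binary terms in one variable. -/
inductive LDTerm : Type
  | x : LDTerm
  | op : LDTerm → LDTerm → LDTerm

namespace LDTerm

/-- One-step left-distributive expansion. -/
inductive Step : LDTerm → LDTerm → Prop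
  | base (a b c : LDTerm) : Step (op a (op b c)) (op (op a b) (op a c))
  | left {a a' : LDTerm} (b : LDTerm) : Step a a' → Step (op a b) (op a' b)
  | right (a : LDTerm) {b b' : LDTerm} : Step b b' → Step (op a b) (op a b')

/-- Iterated left-distributive expansion. -/
abbrev Steps : LDTerm → LDTerm → Prop := Relation.ReflTransGen Step

lemma Steps.op {a a' b b' : LDTerm} (h : Steps a a') (h' : Steps b b') :
    Steps (op a b) (op a' b') :=
  (h.lift (fun t => LDTerm.op t b) (fun _ _ s => Step.left b s)).trans
    (h'.lift (fun t => LDTerm.op a' t) (fun _ _ s => Step.right a' s))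

/-- Distribution of `t` through `s`. -/
def dist (t : LDTerm) : LDTerm → LDTerm
  | x => op t x
  | op a b => op (dist t a) (dist t b)

/-- Dehornoy's derivative. -/
def der : LDTerm → LDTerm
  | x => x
  | op a b => dist (der a) (der b)

lemma op_dist (t s : LDTerm) : Steps (op t s) (dist t s) := by
  induction s with
  | x => exact .refl
  | op a b iha ihb => exact (Relation.ReflTransGen.single (Step.base t a b)).trans (iha.op ihb)

lemma dist_left {t t' : LDTerm} (h : Steps t t') (s : LDTerm) :
    Steps (dist t s) (dist t' s) := by
  induction s with
  | x => exact h.op .refl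
  | op a b iha ihb => exact iha.op ihb

lemma dist_step (t : LDTerm) {s s' : LDTerm} (h : Step s s') :
    Step (dist t s) (dist t s') := by
  induction h with
  | base a b c => exact Step.base _ _ _
  | left b _ ih => exact Step.left _ ih
  | right a _ ih => exact Step.right _ ih

lemma dist_right (t : LDTerm) {s s' : LDTerm} (h : Steps s s') :
    Steps (dist t s) (dist t s') :=
  h.lift (dist t) (fun _ _ => dist_step t)

lemma dist_dist (t s r : LDTerm) : Steps (dist t (dist s r)) (dist (dist t s) (dist t r)) := by
  induction r with
  | x =>
    exact (Relation.ReflTransGen.single (Step.base (dist t s) t x)).trans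
      ((op_dist _ _).op .refl)
  | op a b iha ihb => exact iha.op ihb

lemma to_der (t : LDTerm) : Steps t (der t) := by
  induction t with
  | x => exact .refl
  | op a b iha ihb => exact (iha.op ihb).trans (op_dist _ _)

lemma der_step {t t' : LDTerm} (h : Step t t') : Steps (der t) (der t') := by
  induction h with
  | base a b c => exact dist_dist _ _ _
  | left b _ ih => exact dist_left ih _
  | right a _ ih => exact dist_right _ ih

lemma der_steps {t t' : LDTerm} (h : Steps t t') : Steps (der t) (der t') := by
  induction h with
  | refl => exact .refl
  | tail _ h ih => exact ih.trans (der_step h)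

lemma base_aux (A B C : LDTerm) : Steps (op (op A B) (op A C)) (dist A (dist B C)) := by
  induction C with
  | x => exact (op_dist A B).op .refl
  | op a b iha ihb =>
    exact (Relation.ReflTransGen.single (Step.right (op A B) (Step.base A a b))).trans
      ((Relation.ReflTransGen.single (Step.base (op A B) (op A a) (op A b))).trans (iha.op ihb))

lemma step_der {t t' : LDTerm} (h : Step t t') : Steps t' (der t) := by
  induction h with
  | base a b c =>
    exact (((to_der a).op (to_der b)).op ((to_der a).op (to_der c))).trans (base_aux _ _ _)
  | left b _ ih => exact (ih.op (to_der b)).trans (op_dist _ _)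
  | right a _ ih => exact ((to_der a).op ih).trans (op_dist _ _)

/-- LD-equivalence. -/
abbrev Eqv : LDTerm → LDTerm → Prop := Relation.EqvGen Step

lemma Eqv.join {t t' : LDTerm} (h : Eqv t t') : ∃ s, Steps t s ∧ Steps t' s := by
  have trans' : ∀ {a b c : LDTerm}, Steps b a → Steps b c → ∃ s, Steps a s ∧ Steps c s := by
    intro a b c h1 h2
    induction h2 with
    | refl => exact ⟨a, .refl, h1⟩
    | tail _ hs ih =>
      obtain ⟨s, hs1, hs2⟩ := ih
      exact ⟨der s, hs1.trans (to_der s), (step_der hs).trans (der_steps hs2)⟩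
  induction h with
  | rel a b h => exact ⟨b, .single h, .refl⟩
  | refl a => exact ⟨a, .refl, .refl⟩
  | symm a b _ ih => obtain ⟨s, h1, h2⟩ := ih; exact ⟨s, h2, h1⟩
  | trans a b c _ _ ih1 ih2 =>
    obtain ⟨s, h1, h2⟩ := ih1
    obtain ⟨s', h3, h4⟩ := ih2
    obtain ⟨r, h5, h6⟩ := trans' h2 h3
    exact ⟨r, h1.trans h5, h4.trans h6⟩

lemma Eqv.op_right (a : LDTerm) {b b' : LDTerm} (h : Eqv b b') : Eqv (op a b) (op a b') := by
  induction h with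
  | rel _ _ h => exact .rel _ _ (Step.right a h)
  | refl _ => exact .refl _
  | symm _ _ _ ih => exact .symm _ _ ih
  | trans _ _ _ _ _ ih1 ih2 => exact .trans _ _ _ ih1 ih2

/-- Right powers of the variable. -/
def pw : ℕ → LDTerm
  | 0 => x
  | n + 1 => op x (pw n)

lemma absorb (t : LDTerm) : ∃ N, ∀ n, N ≤ n → Eqv (op t (pw n)) (pw (n + 1)) := by
  induction t with
  | x => exact ⟨0, fun n _ => .refl _⟩
  | op b c ihb ihc =>
    obtain ⟨N, hN⟩ := ihb
    obtain ⟨M, hM⟩ := ihc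
    refine ⟨N + M + 1, fun n hn => ?_⟩
    obtain ⟨m, rfl⟩ : ∃ m, n = m + 1 := ⟨n - 1, by omega⟩
    have h1 := Eqv.op_right (op b c) (hN m (by omega))
    have h2 : Eqv (op (op b c) (op b (pw m))) (op b (op c (pw m))) :=
      .symm _ _ (.rel _ _ (Step.base b c (pw m)))
    have h3 := Eqv.op_right b (hM m (by omega))
    exact (h1.symm _ _).trans _ _ _ (h2.trans _ _ _ (h3.trans _ _ _ (hN (m + 1) (by omega))))

/-- `IsLeft u t`: `u` lies on the left spine of `t`. -/
inductive IsLeft : LDTerm → LDTerm → Prop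
  | refl (t : LDTerm) : IsLeft t t
  | op {u a : LDTerm} (b : LDTerm) : IsLeft u a → IsLeft u (op a b)

lemma IsLeft.step {t t' : LDTerm} (h : Step t t') :
    ∀ {u : LDTerm}, IsLeft u t → ∃ u', IsLeft u' t' ∧ Steps u u' := by
  induction h with
  | base a b c =>
    intro u hu
    cases hu with
    | refl => exact ⟨_, .refl _, .single (Step.base a b c)⟩
    | op _ h => exact ⟨u, .op _ (.op _ h), .refl⟩
  | left b h ih =>
    intro u hu
    cases hu with
    | refl => exact ⟨_, .refl _, .single (Step.left b h)⟩
    | op _ h => obtain ⟨u', h1, h2⟩ := ih h; exact ⟨u', .op _ h1, h2⟩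
  | right a h ih =>
    intro u hu
    cases hu with
    | refl => exact ⟨_, .refl _, .single (Step.right a h)⟩
    | op _ h => exact ⟨u, .op _ h, .refl⟩

lemma IsLeft.steps {t t' u : LDTerm} (h : Steps t t') (hu : IsLeft u t) :
    ∃ u', IsLeft u' t' ∧ Steps u u' := by
  induction h with
  | refl => exact ⟨u, hu, .refl⟩
  | tail _ h ih =>
    obtain ⟨v, h1, h2⟩ := ih
    obtain ⟨w, h3, h4⟩ := IsLeft.step h h1
    exact ⟨w, h3, h2.trans h4⟩

lemma IsLeft.total {u v t : LDTerm} (hu : IsLeft u t) (hv : IsLeft v t) :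
    IsLeft u v ∨ IsLeft v u := by
  induction hu with
  | refl => exact .inr hv
  | op b h ih =>
    cases hv with
    | refl => exact .inl (.op b h)
    | op _ hv => exact ih hv

lemma comparison (s t : LDTerm) :
    ∃ u v, Steps s u ∧ Steps t v ∧ (IsLeft u v ∨ IsLeft v u) := by
  obtain ⟨N, hN⟩ := absorb s
  obtain ⟨M, hM⟩ := absorb t
  obtain ⟨r, h1, h2⟩ := Eqv.join
    ((hN (N + M) (by omega)).trans _ _ _ ((hM (N + M) (by omega)).symm _ _))
  obtain ⟨u, hu, hu'⟩ := IsLeft.steps h1 (.op _ (.refl s))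
  obtain ⟨v, hv, hv'⟩ := IsLeft.steps h2 (.op _ (.refl t))
  exact ⟨u, v, hu', hv', hu.total hv⟩

end LDTerm

end Terms

section Comparison

lemma σ_comm (i j : ℕ) (h : i + 2 ≤ j) : σ i * σ j = σ j * σ i := by
  have := mk_rel_eq_one (r := .of i * .of j * (.of i)⁻¹ * (.of j)⁻¹) (Or.inl ⟨i, j, h, rfl⟩)
  simp only [map_mul, map_inv] at this
  have h2 : σ i * σ j * (σ i)⁻¹ * (σ j)⁻¹ = 1 := this
  rw [mul_inv_eq_one, mul_inv_eq_iff_eq_mul] at h2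
  exact h2

lemma σ_braid (i : ℕ) : σ i * σ (i + 1) * σ i = σ (i + 1) * σ i * σ (i + 1) := by
  have := mk_rel_eq_one (r := .of i * .of (i + 1) * .of i *
              (.of (i + 1) * .of i * .of (i + 1))⁻¹) (Or.inr ⟨i, rfl⟩)
  simp only [map_mul, map_inv] at this
  have h2 : σ i * σ (i + 1) * σ i * (σ (i + 1) * σ i * σ (i + 1))⁻¹ = 1 := this
  rwa [mul_inv_eq_one] at h2

lemma binf_induction {p : Binf → Prop} (g : Binf) (one : p 1)
    (mul : ∀ g i, p g → p (g * σ i)) (inv : ∀ g i, p g → p (g * (σ i)⁻¹)) : p g := by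
  have hg : g ∈ Subgroup.closure (Set.range σ) := by
    have : Subgroup.closure (Set.range σ) = ⊤ := PresentedGroup.closure_range_of braidRels
    rw [this]; trivial
  induction hg using Subgroup.closure_induction_right with
  | one => exact one
  | mul_right x _ y hy ih => obtain ⟨i, rfl⟩ := hy; exact mul _ _ ih
  | mul_inv_cancel x _ y hy ih => obtain ⟨i, rfl⟩ := hy; exact inv _ _ ih

lemma σ0_comm (g : Binf) : σ 0 * sh (sh g) = sh (sh g) * σ 0 := by
  change Commute (σ 0) (sh (sh g))
  induction g using binf_induction with
  | one => simp
  | mul g i ih =>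
    rw [map_mul, map_mul, sh_σ, sh_σ]
    exact ih.mul_right (σ_comm 0 (i + 1 + 1) (by omega))
  | inv g i ih =>
    rw [map_mul, map_mul, map_inv, map_inv, sh_σ, sh_σ]
    exact ih.mul_right (Commute.inv_right (σ_comm 0 (i + 1 + 1) (by omega)))

lemma sc_ld (a b c : Binf) : sc a (sc b c) = sc (sc a b) (sc a c) := by
  have h1 := σ0_comm c
  have h2 : σ 0 * (sh (sh a))⁻¹ = (sh (sh a))⁻¹ * σ 0 := by
    have := σ0_comm a⁻¹; simpa using this
  have h4 : σ 0 * (sh (sh b))⁻¹ = (sh (sh b))⁻¹ * σ 0 := by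
    have := σ0_comm b⁻¹; simpa using this
  have h3 : σ 0 * σ 1 * σ 0 * (σ 1)⁻¹ = σ 1 * σ 0 := by
    rw [σ_braid 0]; simp
  simp only [sc, map_mul, map_inv, sh_σ, mul_inv_rev, inv_inv, zero_add]
  calc _ = a * sh b * sh (sh c) * σ 1 * ((sh (sh b))⁻¹ * σ 0) * (sh a)⁻¹ := by group
    _ = a * sh b * sh (sh c) * (σ 1 * σ 0) * (sh (sh b))⁻¹ * (sh a)⁻¹ := by rw [← h4]; group
    _ = a * sh b * (sh (sh c) * σ 0) * σ 1 * σ 0 * (σ 1)⁻¹ * (sh (sh b))⁻¹ * (sh a)⁻¹ := by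
      rw [← h3]; group
    _ = a * sh b * σ 0 * sh (sh c) * σ 1 * (σ 0 * (sh (sh a))⁻¹) * sh (sh a) *
        (σ 1)⁻¹ * (sh (sh b))⁻¹ * (sh a)⁻¹ := by rw [← h1]; group
    _ = _ := by rw [h2]; group

namespace LDTerm

/-- Evaluation of a term in `Binf`. -/
def ev : LDTerm → Binf
  | x => 1
  | op a b => sc (ev a) (ev b)

lemma ev_step {s t : LDTerm} (h : Step s t) : ev s = ev t := by
  induction h with
  | base a b c => exact sc_ld _ _ _
  | left b _ ih => simp only [ev, ih]
  | right b _ ih => simp only [ev, ih]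

lemma ev_steps {s t : LDTerm} (h : Steps s t) : ev s = ev t := by
  induction h with
  | refl => rfl
  | tail _ h ih => rw [ih, ev_step h]

end LDTerm

lemma sigma1Pos.mul {a b : Binf} (ha : sigma1Pos a) (hb : sigma1Pos b) : sigma1Pos (a * b) := by
  obtain ⟨l, g, hl, rfl⟩ := ha
  obtain ⟨l', g', hl', rfl⟩ := hb
  cases l' with
  | nil => exact absurd rfl hl'
  | cons c l' =>
    refine ⟨l ++ (g * c) :: l', g', by simp, ?_⟩
    simp [mul_assoc]

lemma sigma1Pos.mul_sh {a : Binf} (ha : sigma1Pos a) (b : Binf) : sigma1Pos (a * sh b) := by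
  obtain ⟨l, g, hl, rfl⟩ := ha
  exact ⟨l, g * b, hl, by simp [mul_assoc]⟩

lemma sigma1Pos.sh_mul {a : Binf} (ha : sigma1Pos a) (b : Binf) : sigma1Pos (sh b * a) := by
  obtain ⟨l, g, hl, rfl⟩ := ha
  cases l with
  | nil => exact absurd rfl hl
  | cons c l => exact ⟨(b * c) :: l, g, by simp, by simp [mul_assoc]⟩

lemma sc_pos (a b : Binf) : sigma1Pos (a⁻¹ * sc a b) :=
  ⟨[b], a⁻¹, by simp, by simp [sc, mul_assoc]⟩

lemma ev_isLeft {u v : LDTerm} (h : LDTerm.IsLeft u v) :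
    u.ev = v.ev ∨ sigma1Pos (u.ev⁻¹ * v.ev) := by
  induction h with
  | refl => exact .inl rfl
  | @op a b _ ih =>
    right
    have h2 := sc_pos a.ev b.ev
    rcases ih with ih | ih
    · rw [ih]; exact h2
    · have := ih.mul h2
      simpa [LDTerm.ev, mul_assoc] using this

lemma ev_compare (s t : LDTerm) :
    s.ev = t.ev ∨ sigma1Pos (s.ev⁻¹ * t.ev) ∨ sigma1Pos (t.ev⁻¹ * s.ev) := by
  obtain ⟨u, v, h1, h2, h⟩ := LDTerm.comparison s t
  rw [LDTerm.ev_steps h1, LDTerm.ev_steps h2]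
  rcases h with h | h
  · rcases ev_isLeft h with h | h
    · exact .inl h
    · exact .inr (.inl h)
  · rcases ev_isLeft h with h | h
    · exact .inl h.symm
    · exact .inr (.inr h)

/-- Braids decomposable as products of shifted special braids. -/
inductive Dec : Binf → Prop
  | one : Dec 1
  | cons (t : LDTerm) {g : Binf} : Dec g → Dec (t.ev * sh g)

lemma Dec.inv {g : Binf} (h : Dec g) : ∃ (t : LDTerm) (g' : Binf), Dec g' ∧ g = t.ev * sh g' := by
  cases h with
  | one => exact ⟨.x, 1, .one, by simp [LDTerm.ev]⟩
  | cons t h => exact ⟨t, _, h, rfl⟩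

lemma Dec.mul_σ (i : ℕ) : ∀ {g : Binf}, Dec g → Dec (g * σ i) := by
  induction i with
  | zero =>
    intro g h
    obtain ⟨a, g', h', rfl⟩ := h.inv
    obtain ⟨b, r, hr, rfl⟩ := h'.inv
    have : a.ev * sh (b.ev * sh r) * σ 0 = (LDTerm.op a b).ev * sh (a.ev * sh r) := by
      simp only [LDTerm.ev, sc, map_mul, mul_assoc, inv_mul_cancel_left]
      rw [σ0_comm]
    rw [this]
    exact .cons _ (.cons _ hr)
  | succ i ih =>
    intro g h
    obtain ⟨a, g', h', rfl⟩ := h.inv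
    rw [mul_assoc, ← sh_σ, ← map_mul]
    exact .cons _ (ih h')

lemma blt_of_sh {a b : Binf} (h : blt a b) (c : Binf) : blt (c * sh a) (c * sh b) := by
  obtain ⟨k, γ, hγ, h⟩ := h
  refine ⟨k + 1, γ, hγ, ?_⟩
  rw [Function.iterate_succ_apply', ← h]
  simp [mul_assoc]

lemma compare_aux (s t : LDTerm) (a b : Binf) (h : a = b ∨ blt a b ∨ blt b a) :
    s.ev * sh a = t.ev * sh b ∨ blt (s.ev * sh a) (t.ev * sh b) ∨
      blt (t.ev * sh b) (s.ev * sh a) := by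
  rcases ev_compare s t with h' | h' | h'
  · rw [h']
    rcases h with h | h | h
    · exact .inl (by rw [h])
    · exact .inr (.inl (blt_of_sh h _))
    · exact .inr (.inr (blt_of_sh h _))
  · refine .inr (.inl ⟨0, _, (h'.sh_mul a⁻¹).mul_sh b, ?_⟩)
    simp [mul_assoc]
  · refine .inr (.inr ⟨0, _, (h'.sh_mul b⁻¹).mul_sh a, ?_⟩)
    simp [mul_assoc]

lemma Dec.compare {a : Binf} (ha : Dec a) : ∀ {b : Binf}, Dec b → a = b ∨ blt a b ∨ blt b a := by
  induction ha with
  | one =>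
    intro b hb
    induction hb with
    | one => exact .inl rfl
    | cons t _ ih =>
      have := compare_aux .x t _ _ ih
      simpa [LDTerm.ev] using this
  | cons s _ ih =>
    intro b hb
    obtain ⟨t, b', hb', rfl⟩ := hb.inv
    exact compare_aux s t _ _ (ih hb')

end Comparison

section Fractions

/-- The monoid of positive braids. -/
def Pos : Submonoid Binf := Submonoid.closure (Set.range σ)

/-- Positive braids on generators `< n`. -/
def PosLt (n : ℕ) : Submonoid Binf := Submonoid.closure (σ '' Set.Iio n)

lemma σ_mem (i : ℕ) : σ i ∈ Pos := Submonoid.subset_closure ⟨i, rfl⟩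

lemma σ_mem_lt {i n : ℕ} (h : i < n) : σ i ∈ PosLt n := Submonoid.subset_closure ⟨i, h, rfl⟩

lemma PosLt_mono {m n : ℕ} (h : m ≤ n) : PosLt m ≤ PosLt n :=
  Submonoid.closure_mono (Set.image_mono (Set.Iio_subset_Iio h))

lemma PosLt_le (n : ℕ) : PosLt n ≤ Pos := by
  refine Submonoid.closure_mono ?_
  rintro _ ⟨i, _, rfl⟩
  exact ⟨i, rfl⟩

lemma exists_PosLt {g : Binf} (h : g ∈ Pos) : ∃ n, g ∈ PosLt n := by
  induction h using Submonoid.closure_induction with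
  | mem x hx => obtain ⟨i, rfl⟩ := hx; exact ⟨i + 1, σ_mem_lt (by omega)⟩
  | one => exact ⟨0, one_mem _⟩
  | mul x y _ _ hx hy =>
    obtain ⟨n, hn⟩ := hx
    obtain ⟨m, hm⟩ := hy
    exact ⟨n + m, mul_mem (PosLt_mono (by omega) hn) (PosLt_mono (by omega) hm)⟩

/-- `σ_0 ⋯ σ_{n-1}`. -/
def cyc : ℕ → Binf
  | 0 => 1
  | n + 1 => cyc n * σ n

/-- The Garside half-twist on generators `< n`. -/
def gar : ℕ → Binf
  | 0 => 1
  | n + 1 => cyc (n + 1) * gar n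

lemma cyc_mem (n : ℕ) : cyc n ∈ PosLt n := by
  induction n with
  | zero => exact one_mem _
  | succ n ih => exact mul_mem (PosLt_mono (by omega) ih) (σ_mem_lt (by omega))

lemma gar_mem (n : ℕ) : gar n ∈ PosLt n := by
  induction n with
  | zero => exact one_mem _
  | succ n ih => exact mul_mem (cyc_mem _) (PosLt_mono (by omega) ih)

lemma PosLt_comm {n j : ℕ} (h : n < j) {g : Binf} (hg : g ∈ PosLt n) : g * σ j = σ j * g := by
  change Commute g (σ j)
  induction hg using Submonoid.closure_induction with
  | mem x hx => 
    obtain ⟨i, hi, rfl⟩ := hx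
    exact σ_comm i j (by simp at hi; omega)
  | one => exact Commute.one_left _
  | mul x y _ _ hx hy => exact hx.mul_left hy

lemma cyc_σ (n i : ℕ) (h : i + 1 < n) : cyc n * σ i = σ (i + 1) * cyc n := by
  induction n with
  | zero => omega
  | succ n ih =>
    rcases Nat.lt_or_ge (i + 1) n with h' | h'
    · simp only [cyc]
      rw [mul_assoc, ← σ_comm i n (by omega), ← mul_assoc, ih h', mul_assoc]
    · obtain rfl : n = i + 1 := by omega
      simp only [cyc]
      have h1 := PosLt_comm (j := i + 1) (by omega) (cyc_mem i)
      calc _ = cyc i * (σ i * σ (i + 1) * σ i) := by simp only [mul_assoc]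
        _ = cyc i * σ (i + 1) * σ i * σ (i + 1) := by rw [σ_braid]; simp only [mul_assoc]
        _ = _ := by rw [h1]; simp only [mul_assoc]

lemma cyc_sh (n : ℕ) : cyc (n + 1) = σ 0 * sh (cyc n) := by
  induction n with
  | zero => simp [cyc]
  | succ n ih =>
    conv_lhs => rw [cyc, ih]
    simp [cyc, mul_assoc]

lemma cyc_PosLt (n : ℕ) {g : Binf} (hg : g ∈ PosLt n) : cyc (n + 1) * g = sh g * cyc (n + 1) := by
  induction hg using Submonoid.closure_induction with
  | mem x hx =>
    obtain ⟨i, hi, rfl⟩ := hx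
    rw [sh_σ]; exact cyc_σ _ _ (by simp at hi; omega)
  | one => simp
  | mul x y _ _ hx hy => rw [← mul_assoc, hx, mul_assoc, hy, map_mul, mul_assoc]

lemma gar_top (n : ℕ) : gar (n + 1) * σ n = σ 0 * gar (n + 1) := by
  cases n with
  | zero => simp [gar, cyc]
  | succ n =>
    simp only [gar]
    have h1 := PosLt_comm (j := n + 1) (by omega) (gar_mem n)
    have h2 := cyc_PosLt (n + 1) (cyc_mem (n + 1))
    calc _ = cyc (n + 2) * (cyc (n + 1) * (gar n * σ (n + 1))) := by simp only [mul_assoc]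
      _ = cyc (n + 2) * cyc (n + 2) * gar n := by rw [h1]; simp only [cyc, mul_assoc]
      _ = σ 0 * (sh (cyc (n + 1)) * cyc (n + 2)) * gar n := by
        conv_lhs => rw [cyc_sh (n + 1)]
        simp only [mul_assoc, cyc_sh (n + 1)]
      _ = _ := by rw [← h2]; simp only [mul_assoc]

lemma gar_σ (n i : ℕ) (h : i < n) : gar n * σ i = σ (n - 1 - i) * gar n := by
  induction n with
  | zero => omega
  | succ n ih =>
    rcases Nat.lt_or_ge i n with h' | h'
    · rw [gar, mul_assoc, ih h', ← mul_assoc, cyc_σ _ _ (by omega), mul_assoc]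
      congr 2; omega
    · obtain rfl : i = n := by omega
      rw [gar_top]; congr 2; omega

lemma gar_div (n i : ℕ) (h : i < n) : ∃ v ∈ Pos, gar n = v * σ i := by
  induction n with
  | zero => omega
  | succ n ih =>
    rcases Nat.lt_or_ge i n with h' | h'
    · obtain ⟨v, hv, e⟩ := ih h'
      exact ⟨cyc (n + 1) * v, mul_mem (PosLt_le _ (cyc_mem _)) hv, by rw [gar, e, mul_assoc]⟩
    · obtain rfl : i = n := by omega
      have h1 := gar_top i
      refine ⟨sh (cyc i) * gar i, mul_mem ?_ (PosLt_le _ (gar_mem _)), ?_⟩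
      · have : ∀ g ∈ Pos, sh g ∈ Pos := by
          intro g hg
          induction hg using Submonoid.closure_induction with
          | mem x hx => obtain ⟨i, rfl⟩ := hx; rw [sh_σ]; exact σ_mem _
          | one => simp
          | mul x y _ _ hx hy => rw [map_mul]; exact mul_mem hx hy
        exact this _ (PosLt_le _ (cyc_mem _))
      · have h2 : gar (i + 1) = σ 0 * (sh (cyc i) * gar i) := by
          rw [gar, cyc_sh, mul_assoc]
        apply mul_left_cancel (a := σ 0)
        rw [← h1, ← mul_assoc, ← h2]

lemma gar_conj (n : ℕ) {g : Binf} (hg : g ∈ PosLt n) : ∃ g' ∈ Pos, gar n * g = g' * gar n := by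
  induction hg using Submonoid.closure_induction with
  | mem x hx =>
    obtain ⟨i, hi, rfl⟩ := hx
    exact ⟨_, σ_mem _, gar_σ n i hi⟩
  | one => exact ⟨1, one_mem _, by simp⟩
  | mul x y _ _ hx hy =>
    obtain ⟨x', hx', ex⟩ := hx
    obtain ⟨y', hy', ey⟩ := hy
    exact ⟨x' * y', mul_mem hx' hy', by rw [← mul_assoc, ex, mul_assoc, ey, mul_assoc]⟩

lemma fraction (g : Binf) : ∃ p ∈ Pos, ∃ q ∈ Pos, g = p⁻¹ * q := by
  induction g using binf_induction with
  | one => exact ⟨1, one_mem _, 1, one_mem _, by simp⟩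
  | mul g i ih =>
    obtain ⟨p, hp, q, hq, rfl⟩ := ih
    exact ⟨p, hp, q * σ i, mul_mem hq (σ_mem i), by rw [mul_assoc]⟩
  | inv g i ih =>
    obtain ⟨p, hp, q, hq, rfl⟩ := ih
    obtain ⟨n, hn⟩ := exists_PosLt hq
    obtain ⟨q', hq', e⟩ := gar_conj (n + i + 1) (PosLt_mono (by omega) hn)
    obtain ⟨v, hv, e'⟩ := gar_div (n + i + 1) i (by omega)
    refine ⟨gar (n + i + 1) * p, mul_mem (PosLt_le _ (gar_mem _)) hp, q' * v, mul_mem hq' hv, ?_⟩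
    rw [mul_inv_rev, mul_assoc, mul_assoc]
    congr 1
    rw [eq_inv_mul_iff_mul_eq, ← mul_assoc, e, e']
    simp [mul_assoc]

lemma Pos.dec {g : Binf} (hg : g ∈ Pos) : Dec g := by
  induction hg using Submonoid.closure_induction_right with
  | one => exact .one
  | mul_right x _ y hy ih => obtain ⟨i, rfl⟩ := hy; exact ih.mul_σ i

end Fractions

lemma blt_left (γ β₁ β₂ : Binf) (h : blt β₁ β₂) : blt (γ * β₁) (γ * β₂) := by
  obtain ⟨k, g, hg, h⟩ := h
  exact ⟨k, g, hg, by rw [← h]; simp [mul_assoc]⟩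

lemma blt_total (β₁ β₂ : Binf) (hne : β₁ ≠ β₂) : blt β₁ β₂ ∨ blt β₂ β₁ := by
  obtain ⟨p, hp, q, hq, e⟩ := fraction (β₁⁻¹ * β₂)
  have e2 : β₂ = (β₁ * p⁻¹) * q := by rw [mul_assoc, ← e]; simp
  have e1 : β₁ = (β₁ * p⁻¹) * p := by simp
  rcases (Pos.dec hp).compare (Pos.dec hq) with h | h | h
  · exact absurd (by rw [e2, ← h]; simp) hne
  · left; rw [e2]; nth_rewrite 1 [e1]; exact blt_left _ _ _ h
  · right; rw [e2]; nth_rewrite 2 [e1]; exact blt_left _ _ _ h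

lemma blt_trans (β₁ β₂ β₃ : Binf) (h : blt β₁ β₂) (h' : blt β₂ β₃) : blt β₁ β₃ := by
  obtain ⟨k, g, hg, e⟩ := h
  obtain ⟨l, g', hg', e'⟩ := h'
  have e3 : β₁⁻¹ * β₃ = (⇑sh)^[k] g * (⇑sh)^[l] g' := by rw [← e, ← e']; group
  have itm : ∀ (n : ℕ) (a b : Binf), (⇑sh)^[n] (a * b) = (⇑sh)^[n] a * (⇑sh)^[n] b :=
    fun n a b => iterate_map_mul sh n a b
  rcases Nat.lt_trichotomy k l with h | rfl | h
  · obtain ⟨m, rfl⟩ : ∃ m, l = k + (m + 1) := ⟨l - k - 1, by omega⟩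
    refine ⟨k, g * sh ((⇑sh)^[m] g'), hg.mul_sh _, ?_⟩
    rw [e3, itm, Function.iterate_add_apply, Function.iterate_succ_apply']
  · exact ⟨k, g * g', hg.mul hg', by rw [e3, itm]⟩
  · obtain ⟨m, rfl⟩ : ∃ m, k = l + (m + 1) := ⟨k - l - 1, by omega⟩
    refine ⟨l, sh ((⇑sh)^[m] g) * g', hg'.sh_mul _, ?_⟩
    rw [e3, itm, Function.iterate_add_apply, Function.iterate_succ_apply']

section Artin

open FreeGroup hiding map_mul map_inv map_one

/-- Images of generators under the Artin automorphism. -/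
def artFun (i j : ℕ) : FreeGroup ℕ :=
  if j = i then of i * of (i + 1) * (of i)⁻¹ else if j = i + 1 then of i else of j

/-- Images of generators under the inverse Artin automorphism. -/
def artInvFun (i j : ℕ) : FreeGroup ℕ :=
  if j = i then of (i + 1) else if j = i + 1 then (of (i + 1))⁻¹ * of i * of (i + 1) else of j

/-- The Artin automorphism of the free group attached to `σ i`. -/
def art (i : ℕ) : MulAut (FreeGroup ℕ) :=
  MonoidHom.toMulEquiv (FreeGroup.lift (artFun i)) (FreeGroup.lift (artInvFun i))
    (by
      ext j
      by_cases h1 : j = i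
      · subst h1; simp [artFun, artInvFun, mul_assoc]
      · by_cases h2 : j = i + 1
        · subst h2; simp [artFun, artInvFun]
        · simp [artFun, artInvFun, h1, h2])
    (by
      ext j
      by_cases h1 : j = i
      · subst h1; simp [artFun, artInvFun, mul_assoc]
      · by_cases h2 : j = i + 1
        · subst h2; simp [artFun, artInvFun, mul_assoc]
        · simp [artFun, artInvFun, h1, h2])

lemma art_of (i j : ℕ) : art i (of j) = artFun i j := by
  simp [art]

lemma art_self (i : ℕ) : art i (of i) = of i * of (i + 1) * (of i)⁻¹ := by
  simp [art_of, artFun]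

lemma art_succ (i : ℕ) : art i (of (i + 1)) = of i := by
  simp [art_of, artFun]

lemma art_ne (i j : ℕ) (h : j ≠ i) (h' : j ≠ i + 1) : art i (of j) = of j := by
  simp [art_of, artFun, h, h']

lemma mulAut_ext {f g : MulAut (FreeGroup ℕ)} (h : ∀ j, f (of j) = g (of j)) : f = g := by
  have : (f : FreeGroup ℕ →* FreeGroup ℕ) = (g : FreeGroup ℕ →* FreeGroup ℕ) :=
    FreeGroup.ext_hom _ _ h
  ext x
  exact DFunLike.congr_fun this x

lemma art_comm (i j : ℕ) (h : i + 2 ≤ j) : art i * art j = art j * art i := by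
  apply mulAut_ext
  intro k
  simp only [MulAut.mul_apply]
  by_cases h1 : k = i
  · subst h1
    rw [art_ne j k (by omega) (by omega), art_self, map_mul, map_mul, map_inv,
      art_ne j k (by omega) (by omega), art_ne j (k + 1) (by omega) (by omega)]
  by_cases h2 : k = i + 1
  · subst h2
    rw [art_ne j (i + 1) (by omega) (by omega), art_succ, art_ne j i (by omega) (by omega)]
  rw [art_ne i k h1 h2]
  by_cases h3 : k = j
  · subst h3
    rw [art_self, map_mul, map_mul, map_inv, art_ne i k (by omega) (by omega),
      art_ne i (k + 1) (by omega) (by omega)]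
  by_cases h4 : k = j + 1
  · subst h4
    rw [art_succ, art_ne i j (by omega) (by omega)]
  rw [art_ne j k h3 h4, art_ne i k h1 h2]

lemma art_braid (i : ℕ) : art i * art (i + 1) * art i = art (i + 1) * art i * art (i + 1) := by
  apply mulAut_ext
  intro k
  simp only [MulAut.mul_apply]
  have e1 := art_self i
  have e2 := art_succ i
  have e3 := art_ne i (i + 1 + 1) (by omega) (by omega)
  have f1 := art_ne (i + 1) i (by omega) (by omega)
  have f2 := art_self (i + 1)
  have f3 := art_succ (i + 1)
  by_cases h1 : k = i
  · subst h1
    simp only [e1, e2, e3, f1, f2, f3, map_mul, map_inv]; group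
  by_cases h2 : k = i + 1
  · subst h2
    simp only [e1, e2, e3, f1, f2, f3, map_mul, map_inv]
  by_cases h3 : k = i + 1 + 1
  · subst h3
    simp only [e1, e2, e3, f1, f2, f3, map_mul, map_inv]
  simp only [art_ne i k h1 h2, art_ne (i + 1) k h2 h3]

lemma art_rels : ∀ r ∈ braidRels, FreeGroup.lift art r = 1 := by
  rintro r (⟨i, j, h, rfl⟩ | ⟨i, rfl⟩)
  · simp only [map_mul, map_inv, FreeGroup.lift_apply_of]
    rw [mul_inv_eq_one, mul_inv_eq_iff_eq_mul]
    exact art_comm i j h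
  · simp only [map_mul, map_inv, FreeGroup.lift_apply_of, mul_inv_eq_one]
    exact art_braid i

/-- Artin's representation. -/
def artin : Binf →* MulAut (FreeGroup ℕ) := PresentedGroup.toGroup art_rels

lemma artin_σ (i : ℕ) : artin (σ i) = art i := PresentedGroup.toGroup.of art_rels

/-- Shape of the image under `art i` of a reduced word, given the shape of the word. -/
def Shape (i : ℕ) : List (ℕ × Bool) → List (ℕ × Bool) → Prop
  | [], M => M = []
  | (j, e) :: _, M =>
    if j = i then ∃ N, M = (i, true) :: (i + 1, e) :: N
    else if j = i + 1 then
      if e then ∃ N, M = (i, true) :: N ∧ ∀ p ∈ N.head?, p.1 ≠ i + 1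
      else ∃ N p, M = p :: N ∧ (p = (i, false) ∨ p.1 = i + 1)
    else ∃ N, M = (j, e) :: N

lemma isReduced_cons {p : ℕ × Bool} {L : List (ℕ × Bool)} (h : IsReduced L)
    (h' : ∀ q ∈ L.head?, p.1 = q.1 → p.2 = q.2) : IsReduced (p :: L) := by
  cases L with
  | nil => exact IsReduced.singleton
  | cons q L => exact isReduced_cons_cons.2 ⟨h' q (by simp), h⟩

lemma mk_cons (j : ℕ) (e : Bool) (L : List (ℕ × Bool)) :
    FreeGroup.mk ((j, e) :: L) = (if e then of j else (of j)⁻¹) * FreeGroup.mk L := by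
  cases e <;> simp [FreeGroup.of, FreeGroup.inv_mk, FreeGroup.invRev]

lemma mk_true (j : ℕ) (L : List (ℕ × Bool)) :
    FreeGroup.mk ((j, true) :: L) = of j * FreeGroup.mk L := by
  simp [mk_cons]

lemma mk_false (j : ℕ) (L : List (ℕ × Bool)) :
    FreeGroup.mk ((j, false) :: L) = (of j)⁻¹ * FreeGroup.mk L := by
  simp [mk_cons]

/-- Possible first letters. -/
lemma shape_mul_inv {i : ℕ} {L M : List (ℕ × Bool)} (hM : IsReduced M) (hS : Shape i L M)
    : ∃ M', IsReduced M' ∧ FreeGroup.mk M' = (of i)⁻¹ * FreeGroup.mk M ∧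
      (match L with
       | [] => M' = [(i, false)]
       | (j, e) :: _ =>
          if j = i then ∃ N, M' = (i + 1, e) :: N
          else if j = i + 1 then
            if e then ∀ p ∈ M'.head?, p.1 ≠ i + 1
            else ∃ N, M' = (i, false) :: N
          else ∃ N, M' = (i, false) :: N) := by
  cases L with
  | nil => 
    obtain rfl : M = [] := hS
    exact ⟨[(i, false)], IsReduced.singleton, by simp [mk_false], rfl⟩
  | cons q L =>
    obtain ⟨j, e⟩ := q
    simp only [Shape] at hS
    by_cases h1 : j = i
    · simp only [h1, if_true] at hS ⊢
      obtain ⟨N, rfl⟩ := hS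
      refine ⟨_, (isReduced_cons_cons.1 hM).2, ?_, N, rfl⟩
      rw [mk_true]; simp
    · simp only [h1, if_false] at hS ⊢
      by_cases h2 : j = i + 1
      · simp only [h2, if_true] at hS ⊢
        cases e with
        | true =>
          simp only [if_true] at hS ⊢
          obtain ⟨N, rfl, hN⟩ := hS
          refine ⟨N, List.IsChain.tail hM, ?_, hN⟩
          rw [mk_true]; simp
        | false =>
          simp only [Bool.false_eq_true, if_false] at hS ⊢
          obtain ⟨N, p, rfl, hp⟩ := hS
          refine ⟨(i, false) :: p :: N, isReduced_cons hM ?_, by rw [mk_false], _, rfl⟩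
          rcases hp with rfl | hp
          · simp
          · simp [hp]
      · simp only [h2, if_false] at hS ⊢
        obtain ⟨N, rfl⟩ := hS
        refine ⟨(i, false) :: (j, e) :: N, isReduced_cons hM ?_, by rw [mk_false], _, rfl⟩
        simp [Ne.symm h1]

lemma shape_exists (i : ℕ) (L : List (ℕ × Bool)) (hL : IsReduced L) :
    ∃ M, IsReduced M ∧ art i (FreeGroup.mk L) = FreeGroup.mk M ∧ Shape i L M := by
  induction L with
  | nil => exact ⟨[], IsReduced.nil, map_one _, rfl⟩
  | cons q L ih =>
    obtain ⟨j, e⟩ := q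
    obtain ⟨M, hM, eM, hS⟩ := ih (List.IsChain.tail hL)
    have hhd : ∀ p ∈ L.head?, j = p.1 → e = p.2 := by
      cases L with
      | nil => simp
      | cons p L => 
        have := (isReduced_cons_cons.1 hL).1
        simpa using this
    by_cases h1 : j = i
    · subst h1
      obtain ⟨M', hM', eM', hs'⟩ := shape_mul_inv hM hS
      refine ⟨(j, true) :: (j + 1, e) :: M', ?_, ?_, ?_⟩
      · refine isReduced_cons (isReduced_cons hM' ?_) (by simp)
        cases L with
        | nil => simp only at hs'; subst hs'; simp
        | cons p L =>
          obtain ⟨k, e'⟩ := p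
          simp only at hs'
          split_ifs at hs' with h2 h3 h4
          · obtain ⟨N, rfl⟩ := hs'
            have := hhd (k, e') (by simp) h2.symm
            simpa using this
          · intro q hq hq'
            exact absurd hq'.symm (hs' q hq)
          · obtain ⟨N, rfl⟩ := hs'
            simp
          · obtain ⟨N, rfl⟩ := hs'
            simp
      · rw [mk_cons, map_mul, eM, mk_true, mk_cons, eM']
        cases e <;> simp [art_self, mul_assoc]
      · simp [Shape]
    by_cases h2 : j = i + 1
    · subst h2
      cases e with
      | true =>
        refine ⟨(i, true) :: M, isReduced_cons hM ?_, ?_, ?_⟩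
        · cases L with
          | nil => obtain rfl : M = [] := hS; simp
          | cons p L =>
            obtain ⟨k, e'⟩ := p
            simp only [Shape] at hS
            split_ifs at hS with h2 h3 h4
            · obtain ⟨N, rfl⟩ := hS; simp
            · obtain ⟨N, rfl, _⟩ := hS; simp
            · exact absurd (hhd (k, e') (by simp) h3.symm) (by simpa using h4)
            · obtain ⟨N, rfl⟩ := hS; simp [Ne.symm h2]
        · rw [mk_true, map_mul, eM, mk_true, art_succ]
        · simp only [Shape, Nat.succ_ne_self, if_false, if_true]
          refine ⟨M, rfl, ?_⟩
          cases L with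
          | nil => obtain rfl : M = [] := hS; simp
          | cons p L =>
            obtain ⟨k, e'⟩ := p
            simp only [Shape] at hS
            split_ifs at hS with h2 h3 h4
            · obtain ⟨N, rfl⟩ := hS; simp
            · obtain ⟨N, rfl, _⟩ := hS; simp
            · exact absurd (hhd (k, e') (by simp) h3.symm) (by simpa using h4)
            · obtain ⟨N, rfl⟩ := hS; simpa using h3
      | false =>
        obtain ⟨M', hM', eM', hs'⟩ := shape_mul_inv hM hS
        refine ⟨M', hM', ?_, ?_⟩
        · rw [mk_false, map_mul, eM, map_inv, art_succ, eM']
        · simp only [Shape, Nat.succ_ne_self, if_false, if_true, Bool.false_eq_true]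
          cases L with
          | nil => simp only at hs'; subst hs'; exact ⟨_, _, rfl, .inl rfl⟩
          | cons p L =>
            obtain ⟨k, e'⟩ := p
            simp only at hs'
            split_ifs at hs' with h2 h3 h4
            · obtain ⟨N, rfl⟩ := hs'
              exact ⟨_, _, rfl, .inr rfl⟩
            · exact absurd (hhd (k, e') (by simp) h3.symm) (by simp [h4])
            · obtain ⟨N, rfl⟩ := hs'
              exact ⟨_, _, rfl, .inl rfl⟩
            · obtain ⟨N, rfl⟩ := hs'
              exact ⟨_, _, rfl, .inl rfl⟩
    · refine ⟨(j, e) :: M, isReduced_cons hM ?_, ?_, ?_⟩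
      · cases L with
        | nil => obtain rfl : M = [] := hS; simp
        | cons p L =>
          obtain ⟨k, e'⟩ := p
          simp only [Shape] at hS
          split_ifs at hS with h3 h4 h5
          · obtain ⟨N, rfl⟩ := hS; simp [h1]
          · obtain ⟨N, rfl, _⟩ := hS; simp [h1]
          · obtain ⟨N, q, rfl, rfl | hq⟩ := hS
            · simp [h1]
            · simp [hq, h2]
          · obtain ⟨N, rfl⟩ := hS
            simpa using hhd (k, e') (by simp)
      · rw [mk_cons, mk_cons, map_mul, eM]
        cases e <;> simp [art_ne i j h1 h2]
      · simp [Shape, h1, h2]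

/-- Elements whose reduced form starts with the `k`-th generator. -/
def Starts (k : ℕ) (w : FreeGroup ℕ) : Prop := w.toWord.head? = some (k, true)

lemma art_toWord (i : ℕ) (w : FreeGroup ℕ) : Shape i w.toWord (art i w).toWord := by
  obtain ⟨M, hM, eM, hS⟩ := shape_exists i w.toWord isReduced_toWord
  rw [FreeGroup.mk_toWord] at eM
  rw [eM, FreeGroup.toWord_mk, hM.reduce_eq]
  exact hS

lemma starts_self (k : ℕ) {w : FreeGroup ℕ} (h : Starts k w) : Starts k (art k w) := by
  have := art_toWord k w
  unfold Starts at *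
  generalize (art k w).toWord = M at *
  generalize w.toWord = L at *
  cases L with
  | nil => simp at h
  | cons p L =>
    obtain rfl : p = (k, true) := by simpa using h
    simp only [Shape, if_true] at this
    obtain ⟨N, rfl⟩ := this
    rfl

lemma starts_gt {k i : ℕ} (hik : k < i) (w : FreeGroup ℕ) : Starts k (art i w) ↔ Starts k w := by
  have := art_toWord i w
  unfold Starts
  generalize (art i w).toWord = M at *
  generalize w.toWord = L at *
  cases L with
  | nil => obtain rfl : M = [] := this; rfl
  | cons p L =>
    obtain ⟨j, e⟩ := p
    simp only [Shape] at this
    split_ifs at this with h1 h2 h3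
    · obtain ⟨N, rfl⟩ := this
      simp; omega
    · obtain ⟨N, rfl, _⟩ := this
      simp; omega
    · obtain ⟨N, q, rfl, rfl | hq⟩ := this
      · simp [h3]
      · obtain ⟨q1, q2⟩ := q
        simp at hq
        simp; omega
    · obtain ⟨N, rfl⟩ := this
      rfl

lemma starts_sh (k : ℕ) (g : Binf) (w : FreeGroup ℕ) :
    Starts k (artin ((⇑sh)^[k + 1] g) w) ↔ Starts k w := by
  have hσ : ∀ (n i : ℕ), (⇑sh)^[n] (σ i) = σ (i + n) := by
    intro n
    induction n with
    | zero => intro i; rfl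
    | succ n ih => intro i; rw [Function.iterate_succ_apply, sh_σ, ih]; congr 1; omega
  induction g using binf_induction generalizing w with
  | one => rw [iterate_map_one]; simp
  | mul g i ih =>
    rw [iterate_map_mul, map_mul, MulAut.mul_apply]
    refine (ih _).trans ?_
    rw [hσ, artin_σ, starts_gt (by omega)]
  | inv g i ih =>
    rw [iterate_map_mul, iterate_map_inv, map_mul, MulAut.mul_apply]
    refine (ih _).trans ?_
    rw [hσ, map_inv, artin_σ,
      ← starts_gt (i := i + (k + 1)) (by omega), MulAut.apply_inv_self]

lemma starts_prod (k : ℕ) (l : List Binf) (w : FreeGroup ℕ) (h : Starts k w) :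
    Starts k (artin ((⇑sh)^[k] (l.map (fun g => sh g * σ 0)).prod) w) := by
  have hσ : ∀ (n : ℕ), (⇑sh)^[n] (σ 0) = σ n := by
    intro n
    induction n with
    | zero => rfl
    | succ n ih => rw [Function.iterate_succ_apply', ih, sh_σ]
  induction l with
  | nil => simpa [iterate_map_one] using h
  | cons g l ih =>
    rw [List.map_cons, List.prod_cons, iterate_map_mul, iterate_map_mul, hσ,
      ← Function.iterate_succ_apply, map_mul, map_mul, MulAut.mul_apply, MulAut.mul_apply,
      starts_sh, artin_σ]
    exact starts_self k ih

lemma pos_ne_one (k : ℕ) {γ : Binf} (h : sigma1Pos γ) : (⇑sh)^[k] γ ≠ 1 := by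
  have hσ : ∀ (n : ℕ), (⇑sh)^[n] (σ 0) = σ n := by
    intro n
    induction n with
    | zero => rfl
    | succ n ih => rw [Function.iterate_succ_apply', ih, sh_σ]
  intro h1
  obtain ⟨l, g, hl, rfl⟩ := h
  obtain ⟨l', c, rfl⟩ : ∃ l' c, l = l' ++ [c] := ⟨_, _, (List.dropLast_append_getLast hl).symm⟩
  set w := (artin ((⇑sh)^[k + 1] g))⁻¹ (of (k + 1)) with hw
  have hw' : artin ((⇑sh)^[k + 1] g) w = of (k + 1) := by rw [hw, MulAut.apply_inv_self]
  have hn : ¬ Starts k w := by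
    rw [← starts_sh k g, hw']
    simp [Starts, FreeGroup.toWord_of]
  apply hn
  have h2 : artin ((⇑sh)^[k] (((l' ++ [c]).map (fun g => sh g * σ 0)).prod * sh g)) w = w := by
    rw [h1]; simp
  rw [← h2, List.map_append, List.prod_append, List.map_singleton, List.prod_singleton,
    iterate_map_mul, iterate_map_mul, iterate_map_mul, hσ, ← Function.iterate_succ_apply,
    ← Function.iterate_succ_apply, map_mul, map_mul, map_mul, MulAut.mul_apply, hw',
    MulAut.mul_apply, MulAut.mul_apply, artin_σ, art_succ]
  apply starts_prod
  rw [starts_sh]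
  simp [Starts, FreeGroup.toWord_of]

end Artin

/-- the braid order `<` is a strict linear order on `Binf`,
compatible with multiplication on the left. -/
theorem braid_order :
    (∀ β : Binf, ¬ blt β β) ∧
    (∀ β₁ β₂ β₃ : Binf, blt β₁ β₂ → blt β₂ β₃ → blt β₁ β₃) ∧
    (∀ β₁ β₂ : Binf, β₁ ≠ β₂ → blt β₁ β₂ ∨ blt β₂ β₁) ∧
    (∀ γ β₁ β₂ : Binf, blt β₁ β₂ → blt (γ * β₁) (γ * β₂)) := by
  refine ⟨?_, blt_trans, blt_total, blt_left⟩
  rintro β ⟨k, γ, hγ, e⟩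
  exact pos_ne_one k hγ (by rw [← e]; simp)
end
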